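/- The map A : 𝕆 → End_ℝ(𝕆 ⊕ 𝕆), A(q)(x,y) = (q·y, −q̄·x), extends to a surjective algebra homomorphism from the Clifford algebra Cl(ℝ⁸) onto End_ℝ(𝕆⊕𝕆); since both algebras have real dimension 2⁸ = 256, this extension is an algebra isomorphism Cl₈ ≅ End_ℝ(ℝ¹⁶). -/

import Mathlib

/-!
Write `A q` for the real endomorphism `(x, y) ↦ (q y, -q̄ x)` of `𝕆 ⊕ 𝕆`. Since
`q̄ (q y) = |q|² y`, `A q` squares to `-|q|²`, so `A` lifts to the Clifford algebra. By
`CliffordAlgebra.equivExterior` the Clifford algebra has dimension `2⁸`, the same as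
`End (𝕆 ⊕ 𝕆)`, so it suffices to show that the lift is surjective, i.e. that the subalgebra
generated by the `A q` is everything.

The subalgebra contains `B q = -A q ∘ A 1 : (x, y) ↦ (q x, q̄ y)`. If `{1, a, b, c}` is the standard
basis of a quaternion subalgebra of `𝕆`, left multiplication by `a`, then `b`, then `c` is a scalar
`±1` on this subalgebra and the opposite scalar on its orthogonal complement. Hence one of
`(1 ± B a ∘ B b ∘ B c) / 2` is the projection which keeps the quaternion subalgebra in the first
summand and its complement in the second. The product of these projections over four lines of the
Fano plane which cover it and have no common point is the rank one projection
`P : (x, y) ↦ (Re x, 0)`.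

For `w = (w₁, w₂)`, the element `X w = B w₁ - A w̄₂` sends `(1, 0)` to `w`, while the first
component of `B p̄ (x, y)` is `p̄ x`, and that of `A p̄ (x, y)` is `p̄ y`. So `X w ∘ P ∘ B p̄` and
`X w ∘ P ∘ A p̄` are the rank one maps `(x, y) ↦ ⟨p, x⟩ w` and `(x, y) ↦ ⟨p, y⟩ w`, and every
endomorphism is a sum of such maps over an orthonormal basis.
-/

noncomputable section

open Quaternion

/-- The octonions, realized via the Cayley–Dickson construction on the quaternions. -/
def Octonion : Type := ℍ[ℝ] × ℍ[ℝ]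

namespace Octonion

instance : AddCommGroup Octonion := inferInstanceAs (AddCommGroup (ℍ[ℝ] × ℍ[ℝ]))
instance : Module ℝ Octonion := inferInstanceAs (Module ℝ (ℍ[ℝ] × ℍ[ℝ]))

def fst (x : Octonion) : ℍ[ℝ] := Prod.fst (x : ℍ[ℝ] × ℍ[ℝ])
def snd (x : Octonion) : ℍ[ℝ] := Prod.snd (x : ℍ[ℝ] × ℍ[ℝ])
def mk (a b : ℍ[ℝ]) : Octonion := ((a, b) : ℍ[ℝ] × ℍ[ℝ])

/-- Cayley–Dickson multiplication. -/
instance : Mul Octonion :=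
  ⟨fun x y => mk (fst x * fst y - star (snd y) * snd x) (snd y * fst x + snd x * star (fst y))⟩

instance : One Octonion := ⟨mk 1 0⟩

/-- Octonionic conjugation. -/
def conj (x : Octonion) : Octonion := mk (star (fst x)) (-(snd x))

/-- Real part. -/
def re (x : Octonion) : ℝ := (fst x).re

/-- The Euclidean inner product ⟨p,q⟩ = Re(p q̄). -/
def inner (x y : Octonion) : ℝ := re (x * conj y)

/-- The squared norm |x|². -/
def normSq (x : Octonion) : ℝ := inner x x

/-- The standard basis e₀ = 1, e₁, …, e₇. -/
def e : Fin 8 → Octonion := fun i =>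
  match i with
  | 0 => mk 1 0
  | 1 => mk ⟨0,1,0,0⟩ 0
  | 2 => mk ⟨0,0,1,0⟩ 0
  | 3 => mk ⟨0,0,0,1⟩ 0
  | 4 => mk 0 1
  | 5 => mk 0 ⟨0,1,0,0⟩
  | 6 => mk 0 ⟨0,0,1,0⟩
  | 7 => mk 0 ⟨0,0,0,1⟩

/-- The associator [a,b,c] = (ab)c − a(bc). -/
def associator (a b c : Octonion) : Octonion := a * b * c - a * (b * c)

end Octonion

/-- The Clifford representation map A(q)(x, y) = (q·y, −q̄·x). -/
def cliffordMap (q : Octonion) : Octonion × Octonion → Octonion × Octonion :=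
  fun v => (q * v.2, -(Octonion.conj q * v.1))

namespace Octonion

/-! ### Octonions in coordinates -/

@[simp] lemma fst_mul (x y : Octonion) :
    fst (x * y) = fst x * fst y - star (snd y) * snd x := rfl
@[simp] lemma snd_mul (x y : Octonion) :
    snd (x * y) = snd y * fst x + snd x * star (fst y) := rfl
@[simp] lemma fst_conj (x : Octonion) : fst (conj x) = star (fst x) := rfl
@[simp] lemma snd_conj (x : Octonion) : snd (conj x) = -snd x := rfl

lemma ext' {x y : Octonion} (h₁ : fst x = fst y) (h₂ : snd x = snd y) : x = y :=
  Prod.ext h₁ h₂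

/-- The octonion with given coordinates in the basis `e 0, …, e 7`. -/
def ofCoords (x0 x1 x2 x3 x4 x5 x6 x7 : ℝ) : Octonion :=
  mk (⟨x0, x1, x2, x3⟩ : ℍ[ℝ,-1,0,-1]) (⟨x4, x5, x6, x7⟩ : ℍ[ℝ,-1,0,-1])

lemma exists_eq_ofCoords (x : Octonion) : ∃ x0 x1 x2 x3 x4 x5 x6 x7,
    x = ofCoords x0 x1 x2 x3 x4 x5 x6 x7 :=
  ⟨_, _, _, _, _, _, _, _, rfl⟩

section Coordinates

variable (r x0 x1 x2 x3 x4 x5 x6 x7 y0 y1 y2 y3 y4 y5 y6 y7 : ℝ)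

@[simp] lemma ofCoords_add : ofCoords x0 x1 x2 x3 x4 x5 x6 x7 + ofCoords y0 y1 y2 y3 y4 y5 y6 y7 =
    ofCoords (x0 + y0) (x1 + y1) (x2 + y2) (x3 + y3) (x4 + y4) (x5 + y5) (x6 + y6) (x7 + y7) := rfl

@[simp] lemma ofCoords_neg : -ofCoords x0 x1 x2 x3 x4 x5 x6 x7 =
    ofCoords (-x0) (-x1) (-x2) (-x3) (-x4) (-x5) (-x6) (-x7) := rfl

@[simp] lemma ofCoords_sub : ofCoords x0 x1 x2 x3 x4 x5 x6 x7 - ofCoords y0 y1 y2 y3 y4 y5 y6 y7 =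
    ofCoords (x0 - y0) (x1 - y1) (x2 - y2) (x3 - y3) (x4 - y4) (x5 - y5) (x6 - y6) (x7 - y7) := rfl

@[simp] lemma ofCoords_smul : r • ofCoords x0 x1 x2 x3 x4 x5 x6 x7 =
    ofCoords (r * x0) (r * x1) (r * x2) (r * x3) (r * x4) (r * x5) (r * x6) (r * x7) := rfl

@[simp] lemma re_fst_ofCoords : (fst (ofCoords x0 x1 x2 x3 x4 x5 x6 x7)).re = x0 := rfl
@[simp] lemma imI_fst_ofCoords : (fst (ofCoords x0 x1 x2 x3 x4 x5 x6 x7)).imI = x1 := rfl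
@[simp] lemma imJ_fst_ofCoords : (fst (ofCoords x0 x1 x2 x3 x4 x5 x6 x7)).imJ = x2 := rfl
@[simp] lemma imK_fst_ofCoords : (fst (ofCoords x0 x1 x2 x3 x4 x5 x6 x7)).imK = x3 := rfl
@[simp] lemma re_snd_ofCoords : (snd (ofCoords x0 x1 x2 x3 x4 x5 x6 x7)).re = x4 := rfl
@[simp] lemma imI_snd_ofCoords : (snd (ofCoords x0 x1 x2 x3 x4 x5 x6 x7)).imI = x5 := rfl
@[simp] lemma imJ_snd_ofCoords : (snd (ofCoords x0 x1 x2 x3 x4 x5 x6 x7)).imJ = x6 := rfl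
@[simp] lemma imK_snd_ofCoords : (snd (ofCoords x0 x1 x2 x3 x4 x5 x6 x7)).imK = x7 := rfl

@[simp] lemma ofCoords_conj : conj (ofCoords x0 x1 x2 x3 x4 x5 x6 x7) =
    ofCoords x0 (-x1) (-x2) (-x3) (-x4) (-x5) (-x6) (-x7) := by
  refine ext' ?_ ?_ <;> ext <;> simp

/-- The octonion multiplication table in the basis `e`. -/
@[simp] lemma ofCoords_mul : ofCoords x0 x1 x2 x3 x4 x5 x6 x7 * ofCoords y0 y1 y2 y3 y4 y5 y6 y7 = ofCoords
    (x0 * y0 - x1 * y1 - x2 * y2 - x3 * y3 - x4 * y4 - x5 * y5 - x6 * y6 - x7 * y7)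
    (x0 * y1 + x1 * y0 + x2 * y3 - x3 * y2 + x4 * y5 - x5 * y4 - x6 * y7 + x7 * y6)
    (x0 * y2 - x1 * y3 + x2 * y0 + x3 * y1 + x4 * y6 + x5 * y7 - x6 * y4 - x7 * y5)
    (x0 * y3 + x1 * y2 - x2 * y1 + x3 * y0 + x4 * y7 - x5 * y6 + x6 * y5 - x7 * y4)
    (x0 * y4 - x1 * y5 - x2 * y6 - x3 * y7 + x4 * y0 + x5 * y1 + x6 * y2 + x7 * y3)
    (x0 * y5 + x1 * y4 - x2 * y7 + x3 * y6 - x4 * y1 + x5 * y0 - x6 * y3 + x7 * y2)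
    (x0 * y6 + x1 * y7 + x2 * y4 - x3 * y5 - x4 * y2 + x5 * y3 + x6 * y0 - x7 * y1)
    (x0 * y7 - x1 * y6 + x2 * y5 + x3 * y4 - x4 * y3 - x5 * y2 + x6 * y1 + x7 * y0) := by
  refine ext' ?_ ?_ <;> ext <;> simp <;> ring

@[simp] lemma ofCoords_re : re (ofCoords x0 x1 x2 x3 x4 x5 x6 x7) = x0 := rfl

end Coordinates

lemma zero_eq : (0 : Octonion) = ofCoords 0 0 0 0 0 0 0 0 := rfl
lemma one_eq : (1 : Octonion) = ofCoords 1 0 0 0 0 0 0 0 := rfl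
lemma e_0 : e 0 = ofCoords 1 0 0 0 0 0 0 0 := rfl
lemma e_1 : e 1 = ofCoords 0 1 0 0 0 0 0 0 := rfl
lemma e_2 : e 2 = ofCoords 0 0 1 0 0 0 0 0 := rfl
lemma e_3 : e 3 = ofCoords 0 0 0 1 0 0 0 0 := rfl
lemma e_4 : e 4 = ofCoords 0 0 0 0 1 0 0 0 := rfl
lemma e_5 : e 5 = ofCoords 0 0 0 0 0 1 0 0 := rfl
lemma e_6 : e 6 = ofCoords 0 0 0 0 0 0 1 0 := rfl
lemma e_7 : e 7 = ofCoords 0 0 0 0 0 0 0 1 := rfl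

lemma add_mul' (x y z : Octonion) :
    (x + y) * z = x * z + y * z := by
  obtain ⟨x0, x1, x2, x3, x4, x5, x6, x7, rfl⟩ := exists_eq_ofCoords x
  obtain ⟨y0, y1, y2, y3, y4, y5, y6, y7, rfl⟩ := exists_eq_ofCoords y
  obtain ⟨z0, z1, z2, z3, z4, z5, z6, z7, rfl⟩ := exists_eq_ofCoords z
  simp only [ofCoords_add, ofCoords_mul]
  congr 1 <;> ring

lemma mul_add' (x y z : Octonion) :
    x * (y + z) = x * y + x * z := by
  obtain ⟨x0, x1, x2, x3, x4, x5, x6, x7, rfl⟩ := exists_eq_ofCoords x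
  obtain ⟨y0, y1, y2, y3, y4, y5, y6, y7, rfl⟩ := exists_eq_ofCoords y
  obtain ⟨z0, z1, z2, z3, z4, z5, z6, z7, rfl⟩ := exists_eq_ofCoords z
  simp only [ofCoords_add, ofCoords_mul]
  congr 1 <;> ring

lemma smul_mul' (r : ℝ) (x y : Octonion) :
    (r • x) * y = r • (x * y) := by
  obtain ⟨x0, x1, x2, x3, x4, x5, x6, x7, rfl⟩ := exists_eq_ofCoords x
  obtain ⟨y0, y1, y2, y3, y4, y5, y6, y7, rfl⟩ := exists_eq_ofCoords y
  simp only [ofCoords_smul, ofCoords_mul]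
  congr 1 <;> ring

lemma mul_smul' (r : ℝ) (x y : Octonion) :
    x * (r • y) = r • (x * y) := by
  obtain ⟨x0, x1, x2, x3, x4, x5, x6, x7, rfl⟩ := exists_eq_ofCoords x
  obtain ⟨y0, y1, y2, y3, y4, y5, y6, y7, rfl⟩ := exists_eq_ofCoords y
  simp only [ofCoords_smul, ofCoords_mul]
  congr 1 <;> ring

lemma mul_neg' (x y : Octonion) :
    x * -y = -(x * y) := by
  obtain ⟨x0, x1, x2, x3, x4, x5, x6, x7, rfl⟩ := exists_eq_ofCoords x
  obtain ⟨y0, y1, y2, y3, y4, y5, y6, y7, rfl⟩ := exists_eq_ofCoords y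
  simp only [ofCoords_neg, ofCoords_mul]
  congr 1 <;> ring

lemma conj_add (x y : Octonion) :
    conj (x + y) = conj x + conj y := by
  obtain ⟨x0, x1, x2, x3, x4, x5, x6, x7, rfl⟩ := exists_eq_ofCoords x
  obtain ⟨y0, y1, y2, y3, y4, y5, y6, y7, rfl⟩ := exists_eq_ofCoords y
  simp only [ofCoords_add, ofCoords_conj]
  congr 1 <;> ring

lemma conj_smul (r : ℝ) (x : Octonion) :
    conj (r • x) = r • conj x := by
  obtain ⟨x0, x1, x2, x3, x4, x5, x6, x7, rfl⟩ := exists_eq_ofCoords x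
  simp only [ofCoords_smul, ofCoords_conj]
  congr 1 <;> ring

/-- A consequence of the alternativity of `𝕆`, which replaces associativity in the computation of
`(A q)²`. -/
lemma mul_conj_mul (x y : Octonion) :
    x * (conj x * y) = normSq x • y := by
  obtain ⟨x0, x1, x2, x3, x4, x5, x6, x7, rfl⟩ := exists_eq_ofCoords x
  obtain ⟨y0, y1, y2, y3, y4, y5, y6, y7, rfl⟩ := exists_eq_ofCoords y
  simp only [normSq, Octonion.inner, ofCoords_smul, ofCoords_conj, ofCoords_mul, ofCoords_re]
  congr 1 <;> ring

lemma conj_mul_mul (x y : Octonion) :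
    conj x * (x * y) = normSq x • y := by
  obtain ⟨x0, x1, x2, x3, x4, x5, x6, x7, rfl⟩ := exists_eq_ofCoords x
  obtain ⟨y0, y1, y2, y3, y4, y5, y6, y7, rfl⟩ := exists_eq_ofCoords y
  simp only [normSq, Octonion.inner, ofCoords_smul, ofCoords_conj, ofCoords_mul, ofCoords_re]
  congr 1 <;> ring

lemma conj_conj (x : Octonion) : conj (conj x) = x := by
  obtain ⟨x0, x1, x2, x3, x4, x5, x6, x7, rfl⟩ := exists_eq_ofCoords x
  simp

lemma conj_one : conj 1 = 1 := by simp [one_eq]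

lemma one_mul' (x : Octonion) : 1 * x = x := by
  obtain ⟨x0, x1, x2, x3, x4, x5, x6, x7, rfl⟩ := exists_eq_ofCoords x
  simp [one_eq]

lemma mul_one' (x : Octonion) : x * 1 = x := by
  obtain ⟨x0, x1, x2, x3, x4, x5, x6, x7, rfl⟩ := exists_eq_ofCoords x
  simp [one_eq]

lemma mul_zero' (x : Octonion) : x * 0 = 0 := by
  obtain ⟨x0, x1, x2, x3, x4, x5, x6, x7, rfl⟩ := exists_eq_ofCoords x
  simp [zero_eq]

lemma inner_add_left (x y z : Octonion) :
    Octonion.inner (x + y) z = Octonion.inner x z + Octonion.inner y z := by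
  rw [Octonion.inner, add_mul']
  rfl

lemma inner_add_right (x y z : Octonion) :
    Octonion.inner x (y + z) = Octonion.inner x y + Octonion.inner x z := by
  rw [Octonion.inner, conj_add, mul_add']
  rfl

lemma inner_smul_left (r : ℝ) (x y : Octonion) :
    Octonion.inner (r • x) y = r * Octonion.inner x y := by
  rw [Octonion.inner, smul_mul']
  rfl

lemma inner_smul_right (r : ℝ) (x y : Octonion) :
    Octonion.inner x (r • y) = r * Octonion.inner x y := by
  rw [Octonion.inner, conj_smul, mul_smul']
  rfl

/-! ### The Clifford representation -/

lemma finrank_eq : Module.finrank ℝ Octonion = 8 := by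
  have h : Module.finrank ℝ (ℍ[ℝ] × ℍ[ℝ]) = 8 := by
    rw [Module.finrank_prod, Quaternion.finrank_eq_four]
  exact h

instance : Module.Finite ℝ Octonion := inferInstanceAs (Module.Finite ℝ (ℍ[ℝ] × ℍ[ℝ]))

/-- The quadratic form `-|x|²`, as the diagonal of the bilinear form `-⟨x, y⟩`. -/
def negNormSq : QuadraticForm ℝ Octonion :=
  LinearMap.BilinMap.toQuadraticMap <|
    LinearMap.mk₂ ℝ (fun x y => -Octonion.inner x y)
      (fun x y z => by rw [inner_add_left, neg_add])
      (fun r x y => by rw [inner_smul_left, smul_eq_mul, mul_neg])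
      (fun x y z => by rw [inner_add_right, neg_add])
      (fun r x y => by rw [inner_smul_right, smul_eq_mul, mul_neg])

lemma negNormSq_apply (x : Octonion) : negNormSq x = -normSq x := rfl

/-- The map `A` as a linear map into the endomorphism algebra. -/
def A : Octonion →ₗ[ℝ] Module.End ℝ (Octonion × Octonion) :=
  LinearMap.mk₂ ℝ cliffordMap
    (fun p q v => by simp only [cliffordMap, add_mul', conj_add, neg_add, Prod.mk_add_mk])
    (fun r q v => by simp only [cliffordMap, smul_mul', conj_smul, smul_neg, Prod.smul_mk])
    (fun q v w => by
      simp only [cliffordMap, mul_add', Prod.fst_add, Prod.snd_add, neg_add, Prod.mk_add_mk])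
    (fun r q v => by
      simp only [cliffordMap, mul_smul', Prod.smul_fst, Prod.smul_snd, smul_neg, Prod.smul_mk])

lemma A_apply (q : Octonion) (v : Octonion × Octonion) :
    A q v = (q * v.2, -(conj q * v.1)) := rfl

lemma A_sq (q : Octonion) : A q * A q = algebraMap ℝ _ (negNormSq q) := by
  refine LinearMap.ext fun v => ?_
  rw [Module.algebraMap_end_apply, negNormSq_apply, Module.End.mul_apply, A_apply, A_apply,
    mul_neg', mul_conj_mul, conj_mul_mul, neg_smul]
  rfl

/-- The even element `-A q ∘ A 1`, acting by `(x, y) ↦ (q x, q̄ y)`. -/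
def B (q : Octonion) : Module.End ℝ (Octonion × Octonion) := -(A q * A 1)

lemma B_apply (q : Octonion) (v : Octonion × Octonion) :
    B q v = (q * v.1, conj q * v.2) := by
  rw [B, LinearMap.neg_apply, Module.End.mul_apply, A_apply, A_apply, mul_neg', conj_one, one_mul',
    one_mul', Prod.neg_mk, neg_neg, neg_neg]

/-! ### Generation of all endomorphisms -/

/-- For a line `{a, b, c}` of the Fano plane and the appropriate sign `ε`, the projection keeping
the span of `1, a, b, c` in the first summand and its complement in the second. -/
def lineProj (ε : ℝ) (a b c : Octonion) : Module.End ℝ (Octonion × Octonion) :=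
  (1 / 2 : ℝ) • (1 + ε • (B a * (B b * B c)))

lemma lineProj_apply (ε : ℝ) (a b c : Octonion) (v : Octonion × Octonion) :
    lineProj ε a b c v = ((1 / 2 : ℝ) • (v.1 + ε • (a * (b * (c * v.1)))),
      (1 / 2 : ℝ) • (v.2 + ε • (conj a * (conj b * (conj c * v.2))))) := by
  simp only [lineProj, LinearMap.smul_apply, LinearMap.add_apply, Module.End.one_apply,
    Module.End.mul_apply, B_apply]
  rfl

section LineProjections

variable (x0 x1 x2 x3 x4 x5 x6 x7 y0 y1 y2 y3 y4 y5 y6 y7 : ℝ)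

lemma lineProj_123 :
    lineProj (-1) (e 1) (e 2) (e 3)
      (ofCoords x0 x1 x2 x3 x4 x5 x6 x7, ofCoords y0 y1 y2 y3 y4 y5 y6 y7) =
      (ofCoords x0 x1 x2 x3 0 0 0 0, ofCoords 0 0 0 0 y4 y5 y6 y7) := by
  rw [lineProj_apply]
  simp only [e_1, e_2, e_3, ofCoords_conj, ofCoords_mul, ofCoords_smul, ofCoords_add]
  congr 2 <;> ring

lemma lineProj_145 :
    lineProj (-1) (e 1) (e 4) (e 5)
      (ofCoords x0 x1 x2 x3 x4 x5 x6 x7, ofCoords y0 y1 y2 y3 y4 y5 y6 y7) =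
      (ofCoords x0 x1 0 0 x4 x5 0 0, ofCoords 0 0 y2 y3 0 0 y6 y7) := by
  rw [lineProj_apply]
  simp only [e_1, e_4, e_5, ofCoords_conj, ofCoords_mul, ofCoords_smul, ofCoords_add]
  congr 2 <;> ring

lemma lineProj_246 :
    lineProj (-1) (e 2) (e 4) (e 6)
      (ofCoords x0 x1 x2 x3 x4 x5 x6 x7, ofCoords y0 y1 y2 y3 y4 y5 y6 y7) =
      (ofCoords x0 0 x2 0 x4 0 x6 0, ofCoords 0 y1 0 y3 0 y5 0 y7) := by
  rw [lineProj_apply]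
  simp only [e_2, e_4, e_6, ofCoords_conj, ofCoords_mul, ofCoords_smul, ofCoords_add]
  congr 2 <;> ring

lemma lineProj_167 :
    lineProj 1 (e 1) (e 6) (e 7)
      (ofCoords x0 x1 x2 x3 x4 x5 x6 x7, ofCoords y0 y1 y2 y3 y4 y5 y6 y7) =
      (ofCoords x0 x1 0 0 0 0 x6 x7, ofCoords 0 0 y2 y3 y4 y5 0 0) := by
  rw [lineProj_apply]
  simp only [e_1, e_6, e_7, ofCoords_conj, ofCoords_mul, ofCoords_smul, ofCoords_add]
  congr 2 <;> ring

end LineProjections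

/-- The rank one projection `(x, y) ↦ (Re x, 0)`, as a product over four lines covering the Fano
plane. -/
def P : Module.End ℝ (Octonion × Octonion) :=
  lineProj 1 (e 1) (e 6) (e 7) * (lineProj (-1) (e 2) (e 4) (e 6) *
    (lineProj (-1) (e 1) (e 4) (e 5) * lineProj (-1) (e 1) (e 2) (e 3)))

lemma P_apply (v : Octonion × Octonion) : P v = (re v.1 • 1, 0) := by
  obtain ⟨x, y⟩ := v
  obtain ⟨x0, x1, x2, x3, x4, x5, x6, x7, rfl⟩ := exists_eq_ofCoords x
  obtain ⟨y0, y1, y2, y3, y4, y5, y6, y7, rfl⟩ := exists_eq_ofCoords y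
  simp only [P, Module.End.mul_apply, lineProj_123, lineProj_145, lineProj_246, lineProj_167]
  simp [one_eq, zero_eq]

/-- An element of the generated subalgebra which sends `(1, 0)` to `w`. -/
def X (w : Octonion × Octonion) : Module.End ℝ (Octonion × Octonion) := B w.1 - A (conj w.2)

lemma X_apply (w : Octonion × Octonion) (r : ℝ) : X w (r • 1, 0) = r • w := by
  rw [X, LinearMap.sub_apply, A_apply, B_apply, conj_conj]
  simp only [mul_smul', mul_one', mul_zero', Prod.mk_sub_mk, sub_zero, zero_sub, neg_neg]
  rfl

/-- Expansion in the orthonormal basis `e`, since `⟨x, e i⟩ = Re (ē_i x)`. -/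
lemma sum_re_conj_smul (x : Octonion) : ∑ i, re (conj (e i) * x) • e i = x := by
  obtain ⟨x0, x1, x2, x3, x4, x5, x6, x7, rfl⟩ := exists_eq_ofCoords x
  simp [Fin.sum_univ_eight, e_0, e_1, e_2, e_3, e_4, e_5, e_6, e_7]

/-- Expansion of an endomorphism into rank one maps `v ↦ ⟨b, v⟩ T b`, where `b` runs over the
orthonormal basis of the vectors `(e i, 0)` and `(0, e i)`. -/
lemma end_eq_sum (T : Module.End ℝ (Octonion × Octonion)) :
    T = ∑ i, (X (T (e i, 0)) * (P * B (conj (e i))) +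
      X (T (0, e i)) * (P * A (conj (e i)))) := by
  refine LinearMap.ext fun v => ?_
  have hv : v = ∑ i, (re (conj (e i) * v.1) • ((e i, 0) : Octonion × Octonion) +
      re (conj (e i) * v.2) • ((0, e i) : Octonion × Octonion)) := by
    refine Prod.ext ?_ ?_ <;> simp [Prod.fst_sum, Prod.snd_sum, sum_re_conj_smul]
  conv_lhs => rw [hv]
  simp only [map_sum, map_add, map_smul, LinearMap.sum_apply, LinearMap.add_apply,
    Module.End.mul_apply, A_apply, B_apply, P_apply, X_apply]

/-- The endomorphisms `A q` generate `End (𝕆 ⊕ 𝕆)`, because the rank one maps of `end_eq_sum` are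
polynomials in them. -/
lemma adjoin_range_A : Algebra.adjoin ℝ (Set.range A) = ⊤ := by
  set S := Algebra.adjoin ℝ (Set.range A)
  have hA (q) : A q ∈ S := Algebra.subset_adjoin ⟨q, rfl⟩
  have hB (q) : B q ∈ S := neg_mem (mul_mem (hA _) (hA _))
  have hL (ε a b c) : lineProj ε a b c ∈ S :=
    S.smul_mem (add_mem (one_mem _) (S.smul_mem (mul_mem (hB _) (mul_mem (hB _) (hB _))) _)) _
  have hP : P ∈ S :=
    mul_mem (hL _ _ _ _) (mul_mem (hL _ _ _ _) (mul_mem (hL _ _ _ _) (hL _ _ _ _)))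
  have hX (w) : X w ∈ S := sub_mem (hB _) (hA _)
  refine eq_top_iff.2 fun T _ => ?_
  rw [end_eq_sum T]
  exact sum_mem fun i _ => add_mem (mul_mem (hX _) (mul_mem hP (hB _)))
    (mul_mem (hX _) (mul_mem hP (hA _)))

/-- The Clifford algebra of an `n`-dimensional real quadratic space is `2 ^ n`-dimensional, having
the dimension of the exterior algebra. -/
lemma finite_and_finrank_clifford {V : Type*} [AddCommGroup V] [Module ℝ V] [Module.Finite ℝ V]
    (Q : QuadraticForm ℝ V) : Module.Finite ℝ (CliffordAlgebra Q) ∧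
      Module.finrank ℝ (CliffordAlgebra Q) = 2 ^ Module.finrank ℝ V := by
  let b := (Module.finBasis ℝ V).ExteriorAlgebra.map (CliffordAlgebra.equivExterior Q).symm
  exact ⟨.of_basis b, by rw [Module.finrank_eq_card_basis b]; simp⟩

end Octonion

/-- A extends to an algebra homomorphism Cl(ℝ⁸, −|·|²) → End_ℝ(𝕆⊕𝕆)
which is an algebra isomorphism (bijective, in particular surjective). -/
theorem cliffordMap_extends_to_clifford_iso :
    ∃ Q : QuadraticForm ℝ Octonion, (∀ x : Octonion, Q x = -Octonion.normSq x) ∧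
      ∃ F : CliffordAlgebra Q →ₐ[ℝ] Module.End ℝ (Octonion × Octonion),
        (∀ (q : Octonion) (v : Octonion × Octonion),
          F (CliffordAlgebra.ι Q q) v = cliffordMap q v) ∧
        Function.Bijective F := by
  refine ⟨Octonion.negNormSq, Octonion.negNormSq_apply,
    CliffordAlgebra.lift _ ⟨Octonion.A, Octonion.A_sq⟩, fun q v => ?_, ?_⟩
  · rw [CliffordAlgebra.lift_ι_apply]
    rfl
  · obtain ⟨hfin, hrank⟩ := Octonion.finite_and_finrank_clifford Octonion.negNormSq
    set F := CliffordAlgebra.lift Octonion.negNormSq ⟨Octonion.A, Octonion.A_sq⟩ with hF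
    have hsurj : Function.Surjective F := by
      rw [← AlgHom.range_eq_top, hF, CliffordAlgebra.range_lift]
      exact Octonion.adjoin_range_A
    refine ⟨?_, hsurj⟩
    refine (LinearMap.injective_iff_surjective_of_finrank_eq_finrank (f := F.toLinearMap) ?_).2 hsurj
    rw [hrank, Module.finrank_linearMap, Module.finrank_prod, Octonion.finrank_eq]
    norm_num
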